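/- arXiv:1612.07915 — 2 statements merged into one kernel-verified Lean document; each statement's English description precedes it below -/
import Mathlib

section
/- For a nonempty unbounded line-free polyhedral set P in ℝ^d, the function φ_P(x) = Σ_{F face of P} (-1)^{dim F} · 1_{F - N(P,F)}(x) is identically equal to 0. -/
open RealInnerProductSpace Pointwise

noncomputable section

abbrev Euc (d : ℕ) := EuclideanSpace ℝ (Fin d)

/-- A polyhedral set: intersection of finitely many closed half-spaces. -/
def IsPolyhedral {d : ℕ} (P : Set (Euc d)) : Prop :=
  ∃ s : Finset (Euc d × ℝ), P = {x | ∀ h ∈ s, ⟪h.1, x⟫ ≤ h.2}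

/-- A (nonempty) face of a convex set: a nonempty convex extreme subset. -/
def IsFaceOf {d : ℕ} (P F : Set (Euc d)) : Prop :=
  F.Nonempty ∧ Convex ℝ F ∧ IsExtreme ℝ P F

/-- The normal cone of `P` at the face `F`. -/
def normalCone {d : ℕ} (P F : Set (Euc d)) : Set (Euc d) :=
  {u | ∀ f ∈ F, ∀ z ∈ P, ⟪u, z - f⟫ ≤ 0}

/-- The dimension of a set: the rank of the direction of its affine hull. -/
def sdim {d : ℕ} (F : Set (Euc d)) : ℕ :=
  Module.finrank ℝ (affineSpan ℝ F).direction

/-- φ_P(x) = Σ_{F face of P} (-1)^{dim F} 1_{F - N(P,F)}(x). -/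
def phi {d : ℕ} (P : Set (Euc d)) (x : Euc d) : ℤ :=
  ∑ᶠ F ∈ {F : Set (Euc d) | IsFaceOf P F},
    (-1 : ℤ) ^ sdim F * (F - normalCone P F).indicator (fun _ => (1 : ℤ)) x

/-- A set is line-free if it contains no affine line. -/
def LineFree {d : ℕ} (P : Set (Euc d)) : Prop :=
  ∀ x y : Euc d, y ≠ 0 → ∃ t : ℝ, x + t • y ∉ P

/-!
Let `w_F(z) = ⟪x - f, z - f⟫`, where `f` is the point of the face `F` nearest to `x`. Then `w_F ≤ 0`
on `F`, and `x ∈ F - N(P, F)` exactly when `w_F ≥ 0` on `P`. Group the remaining faces by `f`. The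
faces in one group are the faces containing `f` on which a fixed functional `w` is nonpositive, for
some `w` that vanishes at `f` and is negative somewhere on `P`; their signs cancel. So `φ_P(x)` is
the Euler characteristic with compact supports `χ(P) = ∑ (-1) ^ dim F`.

Write `P = {x | ∀ g ∈ S, g x ≤ 0}`. Inclusion–exclusion expresses `χ(R ∩ P)`, for `R` convex and
open in its span, through the regions `R_B = {x ∈ R | ∀ g ∈ B, 0 < g x}` with `B ⊆ S`. These matter
only through their dimensions, so `χ(R ∩ P)` is unchanged by a further condition `0 < k x` that
empties no region `R_B`. Both cancellations follow. If `P` contains a ray in direction `r` but not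
its line, then `g.linear r ≤ 0` for all `g ∈ S`, with strict inequality for some `k ∈ S`; moving
along `-r` makes `k` positive, and hence the constraint `k ≤ 0` brings `χ` down to `0`. For a group
at `f`, the same push is made in direction `f - p`, where `p ∈ P` and `w p < 0`, followed by
shrinking towards `f`.
-/

section EulerCharacteristic

open AffineMap Filter Topology

variable {E : Type*} [AddCommGroup E] [Module ℝ E]

/-- A convex set that is open in its affine span. Openness is expressed by being able to prolong
every segment slightly beyond its endpoints, so that no topology on the ambient space is needed. -/
structure IsRelOpenConvex (R : Set E) : Prop where
  convex : Convex ℝ R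
  eventually_lineMap_mem : ∀ x ∈ R, ∀ y ∈ R, ∀ᶠ t in 𝓝 (0 : ℝ), lineMap x y t ∈ R

theorem affineMap_apply_lineMap_real (g : E →ᵃ[ℝ] ℝ) (x y : E) (t : ℝ) :
    g (lineMap x y t) = (1 - t) * g x + t * g y := by
  rw [apply_lineMap, lineMap_apply_ring]

theorem affineMap_apply_add_smul_real (g : E →ᵃ[ℝ] ℝ) (x v : E) (t : ℝ) :
    g (x + t • v) = g x + t * g.linear v := by
  rw [add_comm, ← vadd_eq_add, g.map_vadd, map_smul, smul_eq_mul, vadd_eq_add, add_comm]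

theorem eventually_lineMap_neg (g : E →ᵃ[ℝ] ℝ) {x : E} (hx : g x < 0) (y : E) :
    ∀ᶠ t in 𝓝 (0 : ℝ), g (lineMap x y t) < 0 := by
  have hcont : Continuous fun t : ℝ ↦ g (lineMap x y t) := by
    simpa only [apply_lineMap] using lineMap_continuous
  exact hcont.continuousAt.eventually_lt continuousAt_const (by simpa using hx)

theorem vectorSpan_eq_of_forall_exists_lineMap_mem {Q R : Set E} {x : E} (hQR : Q ⊆ R)
    (hx : x ∈ Q) (h : ∀ y ∈ R, ∃ t : ℝ, t ≠ 0 ∧ lineMap x y t ∈ Q) :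
    vectorSpan ℝ Q = vectorSpan ℝ R := by
  refine le_antisymm (vectorSpan_mono ℝ hQR) ?_
  rw [vectorSpan_eq_span_vsub_set_right ℝ (hQR hx), Submodule.span_le]
  rintro _ ⟨y, hy, rfl⟩
  obtain ⟨t, ht, hmem⟩ := h y hy
  have hspan := vsub_mem_vectorSpan ℝ hmem hx
  rwa [lineMap_vsub_left, Submodule.smul_mem_iff _ ht] at hspan

theorem exists_apply_eq_zero_of_convex {R : Set E} (hR : Convex ℝ R) {g : E →ᵃ[ℝ] ℝ} {x y : E}
    (hx : x ∈ R) (hgx : g x < 0) (hy : y ∈ R) (hgy : 0 < g y) : ∃ z ∈ R, g z = 0 :=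
  (hR.affine_image g).ordConnected.out ⟨x, hx, rfl⟩ ⟨y, hy, rfl⟩ ⟨hgx.le, hgy.le⟩

theorem finrank_inf_ker_add_one {K V : Type*} [Field K] [AddCommGroup V] [Module K V]
    {W : Submodule K V} [FiniteDimensional K W] {f : V →ₗ[K] K} {v : V} (hv : v ∈ W)
    (hfv : f v ≠ 0) :
    Module.finrank K (W ⊓ LinearMap.ker f : Submodule K V) + 1 = Module.finrank K W := by
  have hne : f.domRestrict W ≠ 0 := fun h ↦ hfv (DFunLike.congr_fun h ⟨v, hv⟩)
  rw [← Module.Dual.finrank_ker_add_one_of_ne_zero hne, ← W.map_comap_subtype,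
    Submodule.finrank_map_subtype_eq, LinearMap.ker_domRestrict]

namespace IsRelOpenConvex

variable {R R' : Set E}

theorem univ : IsRelOpenConvex (Set.univ : Set E) :=
  ⟨convex_univ, fun _ _ _ _ ↦ Eventually.of_forall fun _ ↦ Set.mem_univ _⟩

theorem inter (hR : IsRelOpenConvex R) (hR' : IsRelOpenConvex R') : IsRelOpenConvex (R ∩ R') :=
  ⟨hR.convex.inter hR'.convex, fun x hx y hy ↦
    (hR.eventually_lineMap_mem x hx.1 y hy.1).and (hR'.eventually_lineMap_mem x hx.2 y hy.2)⟩

theorem halfSpace_neg (g : E →ᵃ[ℝ] ℝ) : IsRelOpenConvex {x | g x < 0} :=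
  ⟨(convex_Iio 0).affine_preimage g, fun _ hx y _ ↦ eventually_lineMap_neg g hx y⟩

theorem halfSpace_pos (g : E →ᵃ[ℝ] ℝ) : IsRelOpenConvex {x | 0 < g x} := by
  simpa using halfSpace_neg (-g)

theorem hyperplane (g : E →ᵃ[ℝ] ℝ) : IsRelOpenConvex {x | g x = 0} := by
  refine ⟨(convex_singleton 0).affine_preimage g, fun x hx y hy ↦ Eventually.of_forall fun t ↦ ?_⟩
  simp_all

theorem ofPred_forall {ι : Type*} {s : Finset ι} {p : ι → E → Prop}
    (h : ∀ i ∈ s, IsRelOpenConvex {x | p i x}) : IsRelOpenConvex {x | ∀ i ∈ s, p i x} := by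
  constructor
  · simpa only [Set.ofPred_forall] using convex_iInter₂ fun i hi ↦ (h i hi).convex
  · intro x hx y hy
    exact (eventually_all_finset s).2 fun i hi ↦
      (h i hi).eventually_lineMap_mem x (hx i hi) y (hy i hi)

theorem eventually_add_smul_mem (hR : IsRelOpenConvex R) {x v : E} (hx : x ∈ R)
    (hv : v ∈ vectorSpan ℝ R) : ∀ᶠ t in 𝓝 (0 : ℝ), x + t • v ∈ R := by
  have tendsto_mul_zero : ∀ c : ℝ, Tendsto (fun t : ℝ ↦ t * c) (𝓝 0) (𝓝 0) := fun c ↦ by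
    simpa using (continuous_mul_const c).tendsto 0
  rw [vectorSpan_eq_span_vsub_set_right ℝ hx] at hv
  induction hv using Submodule.span_induction with
  | mem v hv =>
    obtain ⟨y, hy, rfl⟩ := hv
    simpa only [lineMap_apply, vsub_eq_sub, vadd_eq_add, add_comm] using
      hR.eventually_lineMap_mem x hx y hy
  | zero => simpa using hx
  | add u v _ _ hu hv =>
    filter_upwards [(tendsto_mul_zero 2).eventually hu, (tendsto_mul_zero 2).eventually hv]
      with t hut hvt
    convert hR.convex.midpoint_mem hut hvt using 1
    rw [midpoint_eq_smul_add, invOf_eq_inv]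
    module
  | smul c v _ hv =>
    simpa only [mul_smul] using (tendsto_mul_zero c).eventually hv

theorem vectorSpan_inter_halfSpace_neg (hR : IsRelOpenConvex R) (g : E →ᵃ[ℝ] ℝ)
    (hne : (R ∩ {x | g x < 0}).Nonempty) :
    vectorSpan ℝ (R ∩ {x | g x < 0}) = vectorSpan ℝ R := by
  obtain ⟨x, hx, hgx⟩ := hne
  refine vectorSpan_eq_of_forall_exists_lineMap_mem Set.inter_subset_left ⟨hx, hgx⟩ fun y hy ↦ ?_
  obtain ⟨t, ht, hmem⟩ :=
    ((hR.eventually_lineMap_mem x hx y hy).and (eventually_lineMap_neg g hgx y)).exists_gt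
  exact ⟨t, ht.ne', hmem⟩

theorem vectorSpan_inter_hyperplane (hR : IsRelOpenConvex R) (g : E →ᵃ[ℝ] ℝ)
    (hne : (R ∩ {x | g x = 0}).Nonempty) :
    vectorSpan ℝ (R ∩ {x | g x = 0}) = vectorSpan ℝ R ⊓ LinearMap.ker g.linear := by
  obtain ⟨x, hx⟩ := hne
  apply le_antisymm
  · refine le_inf (vectorSpan_mono ℝ Set.inter_subset_left) ?_
    rw [vectorSpan_eq_span_vsub_set_right ℝ hx, Submodule.span_le]
    rintro _ ⟨y, hy, rfl⟩
    rw [SetLike.mem_coe, LinearMap.mem_ker, g.linearMap_vsub, hy.2, hx.2, vsub_self]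
  · rintro v ⟨hv, hgv⟩
    obtain ⟨t, ht, hmem⟩ := (hR.eventually_add_smul_mem hx.1 hv).exists_gt
    have hzero : g (x + t • v) = 0 := by
      have hgx : g x = 0 := hx.2
      have hgv : g.linear v = 0 := hgv
      rw [affineMap_apply_add_smul_real, hgx, hgv, mul_zero, add_zero]
    have hspan := vsub_mem_vectorSpan ℝ (Set.mem_inter hmem hzero) hx
    rwa [vsub_eq_sub, add_sub_cancel_left, Submodule.smul_mem_iff _ ht.ne'] at hspan

theorem exists_pos_of_neg (hR : IsRelOpenConvex R) {g : E →ᵃ[ℝ] ℝ} {x y : E} (hx : x ∈ R)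
    (hgx : 0 ≤ g x) (hy : y ∈ R) (hgy : g y < 0) : ∃ z ∈ R, 0 < g z := by
  obtain ⟨t, ht, hmem⟩ := (hR.eventually_lineMap_mem x hx y hy).exists_lt
  refine ⟨_, hmem, ?_⟩
  rw [affineMap_apply_lineMap_real]
  nlinarith

theorem sign_cases (hR : IsRelOpenConvex R) (g : E →ᵃ[ℝ] ℝ) :
    R ⊆ {x | g x < 0} ∨ R ⊆ {x | g x = 0} ∨ R ⊆ {x | 0 < g x} ∨
      (R ∩ {x | g x < 0}).Nonempty ∧ (R ∩ {x | g x = 0}).Nonempty ∧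
        (R ∩ {x | 0 < g x}).Nonempty := by
  by_cases hneg : ∃ x ∈ R, g x < 0 <;> by_cases hpos : ∃ y ∈ R, 0 < g y
  · obtain ⟨x, hx, hgx⟩ := hneg
    obtain ⟨y, hy, hgy⟩ := hpos
    exact .inr <| .inr <| .inr
      ⟨⟨x, hx, hgx⟩, exists_apply_eq_zero_of_convex hR.convex hx hgx hy hgy, ⟨y, hy, hgy⟩⟩
  · obtain ⟨x, hx, hgx⟩ := hneg
    exact .inl fun y hy ↦ lt_of_not_ge fun hgy ↦ hpos (hR.exists_pos_of_neg hy hgy hx hgx)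
  · obtain ⟨y, hy, hgy⟩ := hpos
    refine .inr <| .inr <| .inl fun x hx ↦ Set.mem_ofPred.2 <| lt_of_not_ge fun hgx ↦ hneg ?_
    simpa using hR.exists_pos_of_neg (g := -g) hx (by simpa using hgx) hy (by simpa using hgy)
  · push Not at hneg hpos
    exact .inr <| .inl fun x hx ↦ le_antisymm (hpos x hx) (hneg x hx)

end IsRelOpenConvex

open Classical in
/-- The Euler characteristic with compact supports of a relatively open convex set: a nonempty one
is homeomorphic to a Euclidean space of its dimension. -/
def eulerChar (R : Set E) : ℤ :=
  if R.Nonempty then (-1) ^ Module.finrank ℝ (vectorSpan ℝ R) else 0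

@[simp]
theorem eulerChar_empty : eulerChar (∅ : Set E) = 0 :=
  if_neg Set.not_nonempty_empty

theorem eulerChar_of_nonempty {R : Set E} (hR : R.Nonempty) :
    eulerChar R = (-1) ^ Module.finrank ℝ (vectorSpan ℝ R) :=
  if_pos hR

theorem IsRelOpenConvex.eulerChar_inter_halfSpace_neg {R : Set E} (hR : IsRelOpenConvex R)
    (g : E →ᵃ[ℝ] ℝ) (hne : (R ∩ {x | g x < 0}).Nonempty) :
    eulerChar (R ∩ {x | g x < 0}) = eulerChar R := by
  rw [eulerChar_of_nonempty hne, hR.vectorSpan_inter_halfSpace_neg g hne,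
    eulerChar_of_nonempty (hne.mono Set.inter_subset_left)]

theorem IsRelOpenConvex.eulerChar_inter_halfSpace_pos {R : Set E} (hR : IsRelOpenConvex R)
    (g : E →ᵃ[ℝ] ℝ) (hne : (R ∩ {x | 0 < g x}).Nonempty) :
    eulerChar (R ∩ {x | 0 < g x}) = eulerChar R := by
  simpa using hR.eulerChar_inter_halfSpace_neg (-g) (by simpa using hne)

theorem IsRelOpenConvex.eulerChar_inter_hyperplane [FiniteDimensional ℝ E] {R : Set E}
    (hR : IsRelOpenConvex R) (g : E →ᵃ[ℝ] ℝ) (hzero : (R ∩ {x | g x = 0}).Nonempty)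
    (hpos : (R ∩ {x | 0 < g x}).Nonempty) : eulerChar (R ∩ {x | g x = 0}) = -eulerChar R := by
  have hR' := hzero.mono Set.inter_subset_left
  rw [eulerChar_of_nonempty hzero, hR.vectorSpan_inter_hyperplane g hzero,
    eulerChar_of_nonempty hR']
  obtain ⟨x, hx, hgx : g x = 0⟩ := hzero
  obtain ⟨y, hy, hgy : 0 < g y⟩ := hpos
  have hlinear : g.linear (y -ᵥ x) ≠ 0 := by
    rw [g.linearMap_vsub, hgx, vsub_eq_sub, sub_zero]
    exact hgy.ne'
  rw [← finrank_inf_ker_add_one (vsub_mem_vectorSpan ℝ hy hx) hlinear, pow_succ]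
  ring

theorem IsRelOpenConvex.eulerChar_eq_add [FiniteDimensional ℝ E] {R : Set E}
    (hR : IsRelOpenConvex R) (g : E →ᵃ[ℝ] ℝ) :
    eulerChar R = eulerChar (R ∩ {x | g x < 0}) + eulerChar (R ∩ {x | g x = 0}) +
      eulerChar (R ∩ {x | 0 < g x}) := by
  have hnz : Disjoint {x | g x < 0} {x | g x = 0} :=
    Set.disjoint_left.2 fun _ hx hx' ↦ hx.ne hx'
  have hzp : Disjoint {x | g x = 0} {x | 0 < g x} :=
    Set.disjoint_left.2 fun _ hx hx' ↦ hx'.ne' hx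
  have hnp : Disjoint {x | g x < 0} {x | 0 < g x} :=
    Set.disjoint_left.2 fun _ hx hx' ↦ lt_asymm (Set.mem_ofPred.1 hx) hx'
  rcases hR.sign_cases g with hsub | hsub | hsub | ⟨hneg, hzero, hpos⟩
  · simp [Set.inter_eq_left.2 hsub, (hnz.mono_left hsub).inter_eq, (hnp.mono_left hsub).inter_eq]
  · simp [Set.inter_eq_left.2 hsub, (hnz.symm.mono_left hsub).inter_eq,
      (hzp.mono_left hsub).inter_eq]
  · simp [Set.inter_eq_left.2 hsub, (hzp.symm.mono_left hsub).inter_eq,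
      (hnp.symm.mono_left hsub).inter_eq]
  · rw [hR.eulerChar_inter_halfSpace_neg g hneg, hR.eulerChar_inter_hyperplane g hzero hpos,
      hR.eulerChar_inter_halfSpace_pos g hpos]
    ring

open Classical in
theorem IsRelOpenConvex.eulerChar_sub_inter_halfSpace_pos {R : Set E} (hR : IsRelOpenConvex R)
    (g : E →ᵃ[ℝ] ℝ) :
    eulerChar R - eulerChar (R ∩ {x | 0 < g x}) = if ∀ x ∈ R, g x ≤ 0 then eulerChar R else 0 := by
  split_ifs with hnonpos
  · have hempty : R ∩ {x | 0 < g x} = ∅ :=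
      Set.disjoint_iff_inter_eq_empty.1 <|
        Set.disjoint_left.2 fun x hx hgx ↦ (hnonpos x hx).not_gt hgx
    rw [hempty, eulerChar_empty, sub_zero]
  · push Not at hnonpos
    rw [hR.eulerChar_inter_halfSpace_pos g hnonpos, sub_self]

/-- The polyhedron `{x | ∀ g ∈ S, g x ≤ 0}` cut out by a finite set of affine functionals. -/
def polyhedron (S : Finset (E →ᵃ[ℝ] ℝ)) : Set E :=
  {x | ∀ g ∈ S, g x ≤ 0}

/-- The face of `polyhedron S` on which the constraints in `A` are active; it may be empty. -/
def face (S A : Finset (E →ᵃ[ℝ] ℝ)) : Set E :=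
  {x ∈ polyhedron S | ∀ g ∈ A, g x = 0}

/-- The part of `face S A` on which no constraint outside `A` is active. When nonempty, it is the
relative interior of `face S A`. -/
def openFace (S A : Finset (E →ᵃ[ℝ] ℝ)) : Set E :=
  {x | (∀ g ∈ A, g x = 0) ∧ ∀ g ∈ S, g ∉ A → g x < 0}

/-- The Euler characteristic with compact supports of `R ∩ polyhedron S`, as the sum over the pieces
into which the open faces of `polyhedron S` divide it. -/
def eulerSum (S : Finset (E →ᵃ[ℝ] ℝ)) (R : Set E) : ℤ :=
  ∑ A ∈ S.powerset, eulerChar (R ∩ openFace S A)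

theorem IsRelOpenConvex.openFace (S A : Finset (E →ᵃ[ℝ] ℝ)) : IsRelOpenConvex (openFace S A) := by
  refine (ofPred_forall (s := A) fun g _ ↦ hyperplane g).inter
    (ofPred_forall (s := S) (p := fun g x ↦ g ∉ A → g x < 0) fun g _ ↦ ?_)
  by_cases hg : g ∈ A
  · simpa [hg] using univ
  · simpa [hg] using halfSpace_neg g

theorem exists_forall_pos_and_pos {B : Finset (E →ᵃ[ℝ] ℝ)} {k : E →ᵃ[ℝ] ℝ} {r x : E}
    (hB : ∀ g ∈ B, g.linear r ≤ 0) (hk : k.linear r < 0) (hx : ∀ g ∈ B, 0 < g x) :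
    ∃ y, (∀ g ∈ B, 0 < g y) ∧ 0 < k y := by
  have hscale : (|k x| + 1) / k.linear r ≤ 0 := div_nonpos_of_nonneg_of_nonpos (by positivity) hk.le
  refine ⟨x + ((|k x| + 1) / k.linear r) • r, fun g hg ↦ ?_, ?_⟩ <;>
    rw [affineMap_apply_add_smul_real]
  · linarith [hx g hg, mul_nonneg_of_nonpos_of_nonpos hscale (hB g hg)]
  · rw [div_mul_cancel₀ _ hk.ne]
    linarith [neg_abs_le (k x)]

theorem linear_nonpos_of_forall_apply_add_smul_nonpos {g : E →ᵃ[ℝ] ℝ} {x r : E}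
    (h : ∀ t : ℝ, 0 ≤ t → g (x + t • r) ≤ 0) : g.linear r ≤ 0 := by
  by_contra! hr
  have hscale := h ((|g x| + 1) / g.linear r) (by positivity)
  rw [affineMap_apply_add_smul_real, div_mul_cancel₀ _ hr.ne'] at hscale
  linarith [neg_abs_le (g x)]

section Insert

variable [DecidableEq (E →ᵃ[ℝ] ℝ)] {S A : Finset (E →ᵃ[ℝ] ℝ)} {g : E →ᵃ[ℝ] ℝ}

theorem openFace_insert_of_notMem (hgA : g ∉ A) :
    openFace (insert g S) A = openFace S A ∩ {x | g x < 0} := by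
  ext x
  simp only [openFace, Finset.forall_mem_insert, hgA, not_false_eq_true, true_imp_iff,
    Set.mem_inter_iff, Set.mem_ofPred_eq]
  tauto

theorem openFace_insert_insert (hgS : g ∉ S) :
    openFace (insert g S) (insert g A) = openFace S A ∩ {x | g x = 0} := by
  ext x
  simp only [openFace, Finset.mem_insert, not_or, Set.mem_inter_iff, Set.mem_ofPred_eq]
  grind

theorem eulerSum_insert [FiniteDimensional ℝ E] {R : Set E} (hR : IsRelOpenConvex R) (hgS : g ∉ S) :
    eulerSum (insert g S) R = eulerSum S R - eulerSum S (R ∩ {x | 0 < g x}) := by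
  rw [eulerSum, Finset.sum_powerset_insert hgS, ← Finset.sum_add_distrib, eulerSum, eulerSum,
    ← Finset.sum_sub_distrib]
  refine Finset.sum_congr rfl fun A hA ↦ ?_
  have hgA : g ∉ A := fun hg ↦ hgS (Finset.mem_powerset.1 hA hg)
  rw [Set.inter_right_comm, openFace_insert_of_notMem hgA, openFace_insert_insert hgS,
    ← Set.inter_assoc, ← Set.inter_assoc, (hR.inter (.openFace S A)).eulerChar_eq_add g]
  ring

end Insert

section FiniteDimensional

variable [FiniteDimensional ℝ E] {S : Finset (E →ᵃ[ℝ] ℝ)} {R : Set E}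

theorem eulerSum_eq_sum_powerset (hR : IsRelOpenConvex R) :
    eulerSum S R =
      ∑ B ∈ S.powerset, (-1) ^ B.card * eulerChar (R ∩ {x | ∀ g ∈ B, 0 < g x}) := by
  classical
  induction S using Finset.induction_on generalizing R with
  | empty => simp [eulerSum, openFace]
  | insert g S hgS ih =>
    rw [eulerSum_insert hR hgS, ih hR, ih (hR.inter (.halfSpace_pos g)),
      Finset.sum_powerset_insert hgS, sub_eq_add_neg, ← Finset.sum_neg_distrib]
    congr 1
    refine Finset.sum_congr rfl fun B hB ↦ ?_
    have hgB : g ∉ B := fun hg ↦ hgS (Finset.mem_powerset.1 hB hg)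
    simp only [Finset.card_insert_of_notMem hgB, Finset.forall_mem_insert, Set.ofPred_and,
      Set.inter_assoc]
    ring

theorem eulerSum_inter_halfSpace_pos (hR : IsRelOpenConvex R) {k : E →ᵃ[ℝ] ℝ}
    (h : ∀ B ⊆ S, ∀ x ∈ R, (∀ g ∈ B, 0 < g x) → ∃ y ∈ R, (∀ g ∈ B, 0 < g y) ∧ 0 < k y) :
    eulerSum S (R ∩ {x | 0 < k x}) = eulerSum S R := by
  classical
  rw [eulerSum_eq_sum_powerset (hR.inter (.halfSpace_pos k)), eulerSum_eq_sum_powerset hR]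
  refine Finset.sum_congr rfl fun B hB ↦ ?_
  rw [Set.inter_right_comm]
  rcases (R ∩ {x | ∀ g ∈ B, 0 < g x}).eq_empty_or_nonempty with hempty | ⟨x, hx, hBx⟩
  · simp only [hempty, Set.empty_inter]
  · obtain ⟨y, hy, hBy, hky⟩ := h B (Finset.mem_powerset.1 hB) x hx hBx
    rw [(hR.inter (.ofPred_forall fun g _ ↦ .halfSpace_pos g)).eulerChar_inter_halfSpace_pos k
      ⟨y, ⟨hy, hBy⟩, hky⟩]

theorem eulerSum_univ_eq_zero {r : E} (hr : ∀ g ∈ S, g.linear r ≤ 0) {k : E →ᵃ[ℝ] ℝ} (hkS : k ∈ S)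
    (hk : k.linear r < 0) : eulerSum S Set.univ = 0 := by
  classical
  rw [← Finset.insert_erase hkS, eulerSum_insert .univ (Finset.notMem_erase k S), sub_eq_zero]
  refine (eulerSum_inter_halfSpace_pos .univ fun B hB x _ hx ↦ ?_).symm
  have hBr : ∀ g ∈ B, g.linear r ≤ 0 := fun g hg ↦ hr g (Finset.mem_of_mem_erase (hB hg))
  obtain ⟨y, hy⟩ := exists_forall_pos_and_pos hBr hk hx
  exact ⟨y, Set.mem_univ y, hy⟩

end FiniteDimensional

section Faces

variable {S A B : Finset (E →ᵃ[ℝ] ℝ)}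

theorem face_subset_polyhedron : face S A ⊆ polyhedron S :=
  fun _ hx ↦ hx.1

theorem openFace_subset_face : openFace S A ⊆ face S A := fun x hx ↦
  ⟨fun g hg ↦ by
    by_cases hgA : g ∈ A
    · exact (hx.1 g hgA).le
    · exact (hx.2 g hg hgA).le, hx.1⟩

theorem convex_polyhedron (S : Finset (E →ᵃ[ℝ] ℝ)) : Convex ℝ (polyhedron S) :=
  fun _ hx _ hy _ _ ha hb hab g hg ↦
    (convex_Iic 0).affine_preimage g (hx g hg) (hy g hg) ha hb hab

theorem convex_face (S A : Finset (E →ᵃ[ℝ] ℝ)) : Convex ℝ (face S A) :=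
  (convex_polyhedron S).inter fun _ hx _ hy _ _ ha hb hab g hg ↦
    (convex_singleton 0).affine_preimage g (hx g hg) (hy g hg) ha hb hab

theorem lineMap_mem_openFace {x y : E} (hx : x ∈ face S A) (hy : y ∈ openFace S A) {t : ℝ}
    (ht : t ∈ Set.Ioc (0 : ℝ) 1) : lineMap x y t ∈ openFace S A := by
  refine ⟨fun g hg ↦ ?_, fun g hg hgA ↦ ?_⟩ <;> rw [affineMap_apply_lineMap_real]
  · rw [hx.2 g hg, hy.1 g hg, mul_zero, mul_zero, add_zero]
  · linarith [mul_nonpos_of_nonneg_of_nonpos (sub_nonneg.2 ht.2) (hx.1 g hg),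
      mul_neg_of_pos_of_neg ht.1 (hy.2 g hg hgA)]

theorem eventually_lineMap_mem_openFace {x y : E} (hx : x ∈ openFace S A) (hy : y ∈ face S A) :
    ∀ᶠ t in 𝓝 (0 : ℝ), lineMap x y t ∈ openFace S A := by
  refine .and (.of_forall fun t g hg ↦ ?_) <| (eventually_all_finset S).2 fun g hg ↦ ?_
  · rw [affineMap_apply_lineMap_real, hx.1 g hg, hy.2 g hg, mul_zero, mul_zero, add_zero]
  · by_cases hgA : g ∈ A
    · simp [hgA]
    · simpa [hgA] using eventually_lineMap_neg g (hx.2 g hg hgA) y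

theorem vectorSpan_face (hA : (openFace S A).Nonempty) :
    vectorSpan ℝ (face S A) = vectorSpan ℝ (openFace S A) := by
  obtain ⟨x, hx⟩ := hA
  refine (vectorSpan_eq_of_forall_exists_lineMap_mem openFace_subset_face hx fun y hy ↦ ?_).symm
  obtain ⟨t, ht, hmem⟩ := (eventually_lineMap_mem_openFace hx hy).exists_gt
  exact ⟨t, ht.ne', hmem⟩

theorem forall_mem_face_nonpos_iff (hA : (openFace S A).Nonempty) (g : E →ᵃ[ℝ] ℝ) :
    (∀ x ∈ face S A, g x ≤ 0) ↔ ∀ x ∈ openFace S A, g x ≤ 0 := by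
  refine ⟨fun h x hx ↦ h x (openFace_subset_face hx), fun h x hx ↦ not_lt.1 fun hgx ↦ ?_⟩
  obtain ⟨y, hy⟩ := hA
  have hpos : ∀ᶠ t in 𝓝 (0 : ℝ), 0 < g (lineMap x y t) := by
    simpa only [AffineMap.coe_neg, Pi.neg_apply, neg_lt_zero] using
      eventually_lineMap_neg (-g) (neg_lt_zero.2 hgx) y
  obtain ⟨t, ht, hpos, hle⟩ := (hpos.and (eventually_le_nhds zero_lt_one)).exists_gt
  exact (h _ (lineMap_mem_openFace hx hy ⟨ht, hle⟩)).not_gt hpos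

theorem isExtreme_face (hAS : A ⊆ S) : IsExtreme ℝ (polyhedron S) (face S A) := by
  refine ⟨face_subset_polyhedron, fun x hx y hy z hz hzxy ↦ ⟨hx, fun g hg ↦ ?_⟩⟩
  rw [openSegment_eq_image_lineMap] at hzxy
  obtain ⟨t, ht, rfl⟩ := hzxy
  have hgz := hz.2 g hg
  rw [affineMap_apply_lineMap_real] at hgz
  refine le_antisymm (hx g (hAS hg)) (not_lt.1 fun hgx ↦ ?_)
  linarith [mul_neg_of_pos_of_neg (sub_pos.2 ht.2) hgx,
    mul_nonpos_of_nonneg_of_nonpos ht.1.le (hy g (hAS hg))]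

theorem subset_of_face_subset_face (hAS : A ⊆ S) (hB : (openFace S B).Nonempty)
    (h : face S B ⊆ face S A) : A ⊆ B := by
  obtain ⟨x, hx⟩ := hB
  exact fun g hg ↦ by_contra fun hgB ↦
    (hx.2 g (hAS hg) hgB).ne ((h (openFace_subset_face hx)).2 g hg)

theorem exists_forall_neg_of_convex {F : Set E} (hF : Convex ℝ F) (hne : F.Nonempty)
    {T : Finset (E →ᵃ[ℝ] ℝ)} (hnonpos : ∀ g ∈ T, ∀ x ∈ F, g x ≤ 0)
    (hneg : ∀ g ∈ T, ∃ x ∈ F, g x < 0) : ∃ x ∈ F, ∀ g ∈ T, g x < 0 := by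
  classical
  induction T using Finset.induction_on with
  | empty => exact hne.imp fun x hx ↦ ⟨hx, by simp⟩
  | insert g T _ ih =>
    simp only [Finset.forall_mem_insert] at hnonpos hneg ⊢
    obtain ⟨x, hx, hTx⟩ := ih hnonpos.2 hneg.2
    obtain ⟨y, hy, hgy⟩ := hneg.1
    refine ⟨midpoint ℝ x y, hF.midpoint_mem hx hy, ?_, fun h hh ↦ ?_⟩ <;>
      rw [AffineMap.map_midpoint, midpoint_eq_smul_add, invOf_eq_inv, smul_eq_mul]
    · linarith [hnonpos.1 x hx]
    · linarith [hTx h hh, hnonpos.2 h hh y hy]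

theorem exists_face_eq_of_isExtreme {F : Set E} (hF : IsExtreme ℝ (polyhedron S) F)
    (hconv : Convex ℝ F) (hne : F.Nonempty) :
    ∃ A ⊆ S, (openFace S A).Nonempty ∧ face S A = F := by
  classical
  let A := S.filter fun g ↦ ∀ x ∈ F, g x = 0
  have hFA : F ⊆ face S A := fun x hx ↦
    ⟨hF.subset hx, fun g hg ↦ (Finset.mem_filter.1 hg).2 x hx⟩
  have hnonpos : ∀ g ∈ S \ A, ∀ x ∈ F, g x ≤ 0 := fun g hg x hx ↦
    hF.subset hx g (Finset.mem_sdiff.1 hg).1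
  have hneg : ∀ g ∈ S \ A, ∃ x ∈ F, g x < 0 := fun g hg ↦ by
    obtain ⟨hgS, hgA⟩ := Finset.mem_sdiff.1 hg
    by_contra! hall
    exact hgA (Finset.mem_filter.2 ⟨hgS, fun x hx ↦ (hnonpos g hg x hx).antisymm (hall x hx)⟩)
  obtain ⟨p, hpF, hp⟩ := exists_forall_neg_of_convex hconv hne hnonpos hneg
  have hpA : p ∈ openFace S A :=
    ⟨(hFA hpF).2, fun g hgS hgA ↦ hp g (Finset.mem_sdiff.2 ⟨hgS, hgA⟩)⟩
  refine ⟨A, Finset.filter_subset _ _, ⟨p, hpA⟩, Set.Subset.antisymm (fun q hq ↦ ?_) hFA⟩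
  obtain ⟨t, ht, hmem⟩ := (eventually_lineMap_mem_openFace hpA hq).exists_lt
  have hmem := (openFace_subset_face hmem).1
  refine hF.left_mem_of_mem_openSegment hq.1 hmem hpF ?_
  have ht' : 0 < 1 - t := by linarith
  rw [openSegment_eq_image_lineMap]
  refine ⟨1 / (1 - t), ⟨one_div_pos.2 ht', (div_lt_one ht').2 (by linarith)⟩, ?_⟩
  simp only [lineMap_apply_module]
  match_scalars
  · field_simp
    ring
  · field_simp

end Faces

theorem openFace_sdiff_inter_openFace [DecidableEq (E →ᵃ[ℝ] ℝ)] {S T A : Finset (E →ᵃ[ℝ] ℝ)}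
    (hT : T ⊆ S) (hA : A ⊆ T) : openFace (S \ T) ∅ ∩ openFace T A = openFace S A := by
  ext x
  simp only [openFace, Set.mem_inter_iff, Set.mem_ofPred_eq, Finset.mem_sdiff]
  grind

theorem eulerSum_inter_halfSpace_pos_of_apply_eq_zero [FiniteDimensional ℝ E]
    {T : Finset (E →ᵃ[ℝ] ℝ)} {R : Set E} {f p : E} {w : E →ᵃ[ℝ] ℝ} (hR : IsRelOpenConvex R)
    (hfR : ∀ y, ∀ᶠ t in 𝓝 (0 : ℝ), lineMap f y t ∈ R) (hTf : ∀ g ∈ T, g f = 0)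
    (hTp : ∀ g ∈ T, g p ≤ 0) (hwf : w f = 0) (hwp : w p < 0) :
    eulerSum T (R ∩ {x | 0 < w x}) = eulerSum T R := by
  refine eulerSum_inter_halfSpace_pos hR fun B hB x _ hBx ↦ ?_
  have hlinear : ∀ g : E →ᵃ[ℝ] ℝ, g f = 0 → g.linear (p - f) = g p := fun g hg ↦ by
    rw [← vsub_eq_sub, g.linearMap_vsub, hg, vsub_eq_sub, sub_zero]
  have hB' : ∀ g ∈ B, g.linear (p - f) ≤ 0 := fun g hg ↦
    (hlinear g (hTf g (hB hg))).trans_le (hTp g (hB hg))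
  obtain ⟨y, hBy, hwy⟩ := exists_forall_pos_and_pos hB' ((hlinear w hwf).trans_lt hwp) hBx
  obtain ⟨t, ht, hmem⟩ := (hfR y).exists_gt
  have hpos : ∀ g : E →ᵃ[ℝ] ℝ, g f = 0 → 0 < g y → 0 < g (lineMap f y t) := fun g hgf hgy ↦ by
    rw [affineMap_apply_lineMap_real, hgf, mul_zero, zero_add]
    exact mul_pos ht hgy
  exact ⟨_, hmem, fun g hg ↦ hpos g (hTf g (hB hg)) (hBy g hg), hpos w hwf hwy⟩

theorem eventually_lineMap_mem_openFace_empty {S : Finset (E →ᵃ[ℝ] ℝ)} {x : E}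
    (hx : ∀ g ∈ S, g x < 0) (y : E) : ∀ᶠ t in 𝓝 (0 : ℝ), lineMap x y t ∈ openFace S ∅ := by
  filter_upwards [(eventually_all_finset S).2 fun g hg ↦ eventually_lineMap_neg g (hx g hg) y]
    with t ht
  exact ⟨by simp, fun g hg _ ↦ ht g hg⟩

open Classical in
theorem sum_ite_eulerChar_openFace_eq_zero [FiniteDimensional ℝ E] {S T : Finset (E →ᵃ[ℝ] ℝ)}
    {f p : E} {w : E →ᵃ[ℝ] ℝ} (hTS : T ⊆ S) (hTf : ∀ g ∈ T, g f = 0)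
    (hSf : ∀ g ∈ S, g ∉ T → g f < 0) (hTp : ∀ g ∈ T, g p ≤ 0) (hwf : w f = 0) (hwp : w p < 0) :
    ∑ A ∈ T.powerset, (if ∀ x ∈ openFace S A, w x ≤ 0 then eulerChar (openFace S A) else 0) =
      0 := by
  have hf : ∀ g ∈ S \ T, g f < 0 := fun g hg ↦
    hSf g (Finset.mem_sdiff.1 hg).1 (Finset.mem_sdiff.1 hg).2
  have hpush := eulerSum_inter_halfSpace_pos_of_apply_eq_zero (.openFace (S \ T) ∅)
    (eventually_lineMap_mem_openFace_empty hf) hTf hTp hwf hwp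
  rw [eq_comm, ← sub_eq_zero, eulerSum, eulerSum, ← Finset.sum_sub_distrib] at hpush
  refine (Finset.sum_congr rfl fun A hA ↦ ?_).trans hpush
  rw [Set.inter_right_comm, openFace_sdiff_inter_openFace hTS (Finset.mem_powerset.1 hA),
    (IsRelOpenConvex.openFace S A).eulerChar_sub_inter_halfSpace_pos w]

open Classical in
theorem sum_eulerChar_openFace_eq_zero [FiniteDimensional ℝ E] {S : Finset (E →ᵃ[ℝ] ℝ)} {f p : E}
    {w : E →ᵃ[ℝ] ℝ} (hf : f ∈ polyhedron S) (hp : p ∈ polyhedron S) (hwf : w f = 0)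
    (hwp : w p < 0) :
    ∑ A ∈ S.powerset with (openFace S A).Nonempty ∧ f ∈ face S A ∧ ∀ x ∈ face S A, w x ≤ 0,
      eulerChar (openFace S A) = 0 := by
  let T := S.filter fun g ↦ g f = 0
  have hTS : T ⊆ S := Finset.filter_subset _ _
  have hTf : ∀ g ∈ T, g f = 0 := fun g hg ↦ (Finset.mem_filter.1 hg).2
  have hSf : ∀ g ∈ S, g ∉ T → g f < 0 := fun g hgS hgT ↦
    (hf g hgS).lt_of_ne fun h ↦ hgT (Finset.mem_filter.2 ⟨hgS, h⟩)
  have hface : ∀ A ∈ S.powerset, (f ∈ face S A ↔ A ⊆ T) := fun A hA ↦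
    ⟨fun h g hg ↦ Finset.mem_filter.2 ⟨Finset.mem_powerset.1 hA hg, h.2 g hg⟩,
      fun h ↦ ⟨hf, fun g hg ↦ hTf g (h hg)⟩⟩
  rw [← sum_ite_eulerChar_openFace_eq_zero hTS hTf hSf (fun g hg ↦ hp g (hTS hg)) hwf hwp,
    ← Finset.sum_filter]
  refine Finset.sum_subset_zero_on_sdiff (fun A hA ↦ ?_) (fun A hA ↦ ?_) fun _ _ ↦ rfl
  · obtain ⟨hAS, hne, hfA, hw⟩ := Finset.mem_filter.1 hA
    exact Finset.mem_filter.2 ⟨Finset.mem_powerset.2 ((hface A hAS).1 hfA),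
      (forall_mem_face_nonpos_iff hne w).1 hw⟩
  · obtain ⟨hA, hA'⟩ := Finset.mem_sdiff.1 hA
    obtain ⟨hAT, hw⟩ := Finset.mem_filter.1 hA
    have hAT := Finset.mem_powerset.1 hAT
    have hAS := Finset.mem_powerset.2 (hAT.trans hTS)
    exact if_neg fun hne ↦ hA' <| Finset.mem_filter.2
      ⟨hAS, hne, (hface A hAS).2 hAT, (forall_mem_face_nonpos_iff hne w).2 hw⟩

end EulerCharacteristic

section Closed

variable {E : Type*} [NormedAddCommGroup E] [NormedSpace ℝ E] [FiniteDimensional ℝ E]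

theorem isClosed_polyhedron (S : Finset (E →ᵃ[ℝ] ℝ)) :
    IsClosed (polyhedron S) := by
  simp only [polyhedron, Set.ofPred_forall]
  exact isClosed_biInter fun g _ ↦
    isClosed_le g.continuous_of_finiteDimensional continuous_const

theorem isClosed_face (S A : Finset (E →ᵃ[ℝ] ℝ)) :
    IsClosed (face S A) := by
  have hA : IsClosed {x : E | ∀ g ∈ A, g x = 0} := by
    simp only [Set.ofPred_forall]
    exact isClosed_biInter fun g _ ↦
      isClosed_eq g.continuous_of_finiteDimensional continuous_const
  exact (isClosed_polyhedron S).inter hA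

theorem exists_ray_subset_of_not_isBounded {K : Set E} (hconv : Convex ℝ K) (hclosed : IsClosed K)
    (hub : ¬ Bornology.IsBounded K) {p : E} (hp : p ∈ K) :
    ∃ r ≠ 0, ∀ t : ℝ, 0 ≤ t → p + t • r ∈ K := by
  obtain ⟨r, hr, hcone⟩ := not_bounded_iff_exists_ne_zero_mem_asymptoticCone.1 hub
  refine ⟨r, hr, fun t ht ↦ ?_⟩
  rw [add_comm]
  exact hconv.smul_vadd_mem_of_isClosed_of_mem_asymptoticCone hclosed ht hcone hp

end Closed

section NearestPoint

variable {E : Type*} [NormedAddCommGroup E] [InnerProductSpace ℝ E]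

theorem existsUnique_forall_inner_nonpos {K : Set E} (hne : K.Nonempty)
    (hcomplete : IsComplete K) (hconv : Convex ℝ K) (x : E) :
    ∃! f, f ∈ K ∧ ∀ z ∈ K, ⟪x - f, z - f⟫ ≤ 0 := by
  obtain ⟨f, hf, hmin⟩ := exists_norm_eq_iInf_of_complete_convex hne hcomplete hconv x
  have hinner := (norm_eq_iInf_iff_real_inner_le_zero hconv hf).1 hmin
  refine ⟨f, ⟨hf, hinner⟩, fun g ⟨hg, hginner⟩ ↦ ?_⟩
  have hnorm : ⟪g - f, g - f⟫ = ⟪x - f, g - f⟫ + ⟪x - g, f - g⟫ := by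
    rw [← neg_sub g f, inner_neg_right, ← sub_eq_add_neg, ← inner_sub_left, sub_sub_sub_cancel_left]
  rw [← sub_eq_zero, ← real_inner_self_nonpos, hnorm]
  exact add_nonpos (hinner g hg) (hginner f hf)

/-- The affine functional `z ↦ ⟪u, z - f⟫`. For `u = x - f`, it is nonpositive on a convex set
containing `f` exactly when `f` is the point of that set nearest to `x`. -/
def innerSub (u f : E) : E →ᵃ[ℝ] ℝ :=
  (innerₛₗ ℝ u).toAffineMap - AffineMap.const ℝ E ⟪u, f⟫

theorem innerSub_apply (u f z : E) : innerSub u f z = ⟪u, z - f⟫ := by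
  simp [innerSub, inner_sub_right]

end NearestPoint

theorem exists_eq_polyhedron_of_isPolyhedral {d : ℕ} {P : Set (Euc d)} (hP : IsPolyhedral P) :
    ∃ S, P = polyhedron S := by
  classical
  obtain ⟨s, rfl⟩ := hP
  refine ⟨s.image fun h ↦ (innerₛₗ ℝ h.1).toAffineMap - AffineMap.const ℝ (Euc d) h.2, ?_⟩
  ext x
  simp only [polyhedron, Set.mem_ofPred_eq, Finset.forall_mem_image]
  simp

section Polyhedron

variable {d : ℕ} {S : Finset (Euc d →ᵃ[ℝ] ℝ)}

theorem isFaceOf_polyhedron_iff {F : Set (Euc d)} :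
    IsFaceOf (polyhedron S) F ↔ ∃ A ⊆ S, (openFace S A).Nonempty ∧ face S A = F := by
  constructor
  · rintro ⟨hne, hconv, hext⟩
    exact exists_face_eq_of_isExtreme hext hconv hne
  · rintro ⟨A, hAS, hA, rfl⟩
    exact ⟨hA.mono openFace_subset_face, convex_face S A, isExtreme_face hAS⟩

theorem neg_one_pow_sdim_face {A : Finset (Euc d →ᵃ[ℝ] ℝ)} (hA : (openFace S A).Nonempty) :
    (-1) ^ sdim (face S A) = eulerChar (openFace S A) := by
  rw [eulerChar_of_nonempty hA, sdim, direction_affineSpan, vectorSpan_face hA]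

theorem mem_sub_normalCone_iff {P F : Set (Euc d)} (hFP : F ⊆ P) {x : Euc d} :
    x ∈ F - normalCone P F ↔
      ∃ f ∈ F, (∀ z ∈ F, ⟪x - f, z - f⟫ ≤ 0) ∧ ∀ z ∈ P, 0 ≤ ⟪x - f, z - f⟫ := by
  constructor
  · intro hx
    obtain ⟨f, hf, u, hu, rfl⟩ := Set.mem_sub.1 hx
    refine ⟨f, hf, fun z hz ↦ ?_, fun z hz ↦ ?_⟩ <;> rw [sub_sub_cancel_left, inner_neg_left]
    · rw [← inner_neg_right, neg_sub]
      exact hu z hz f (hFP hf)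
    · exact neg_nonneg.2 (hu f hf z hz)
  · rintro ⟨f, hf, hF, hP⟩
    refine ⟨f, hf, f - x, fun f' hf' z hz ↦ ?_, sub_sub_cancel f x⟩
    have hsplit : ⟪f - x, z - f'⟫ = ⟪x - f, f' - f⟫ - ⟪x - f, z - f⟫ := by
      rw [← inner_sub_right, sub_sub_sub_cancel_right, ← neg_sub x f, ← neg_sub f' z,
        inner_neg_neg]
    linarith [hF f' hf', hP z hz]

open Classical in
theorem phi_polyhedron_eq_sum (S : Finset (Euc d →ᵃ[ℝ] ℝ)) (x : Euc d) :
    phi (polyhedron S) x = ∑ A ∈ S.powerset with (openFace S A).Nonempty ∧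
      x ∈ face S A - normalCone (polyhedron S) (face S A), eulerChar (openFace S A) := by
  let J := S.powerset.filter fun A ↦ (openFace S A).Nonempty
  have hfaces : {F | IsFaceOf (polyhedron S) F} = face S '' J := by
    ext F
    simp [J, isFaceOf_polyhedron_iff, and_assoc]
  have hinj : Set.InjOn (face S) J := by
    intro A hA B hB hAB
    obtain ⟨hAS, hA⟩ := Finset.mem_filter.1 (Finset.mem_coe.1 hA)
    obtain ⟨hBS, hB⟩ := Finset.mem_filter.1 (Finset.mem_coe.1 hB)
    exact (subset_of_face_subset_face (Finset.mem_powerset.1 hAS) hB hAB.ge).antisymm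
      (subset_of_face_subset_face (Finset.mem_powerset.1 hBS) hA hAB.le)
  rw [phi, hfaces, finsum_mem_image hinj, finsum_mem_coe_finset, ← Finset.filter_filter]
  refine (Finset.sum_congr rfl fun A hA ↦ ?_).trans (Finset.sum_filter _ _).symm
  rw [neg_one_pow_sdim_face (Finset.mem_filter.1 hA).2, Set.indicator_apply, mul_ite, mul_one,
    mul_zero]

open Classical in
theorem sum_eulerChar_openFace_of_notMem_eq_zero (S : Finset (Euc d →ᵃ[ℝ] ℝ)) (x : Euc d) :
    ∑ A ∈ S.powerset with (openFace S A).Nonempty ∧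
      x ∉ face S A - normalCone (polyhedron S) (face S A), eulerChar (openFace S A) = 0 := by
  have hnearest : ∀ A, (openFace S A).Nonempty →
      ∃! f, f ∈ face S A ∧ ∀ z ∈ face S A, ⟪x - f, z - f⟫ ≤ 0 := fun A hA ↦
    existsUnique_forall_inner_nonpos (hA.mono openFace_subset_face) (isClosed_face S A).isComplete
      (convex_face S A) x
  choose! π hπ hπ_unique using hnearest
  rw [← Finset.sum_fiberwise_of_maps_to fun A ↦ Finset.mem_image_of_mem π]
  refine Finset.sum_eq_zero fun f hf ↦ ?_
  obtain ⟨A₀, hA₀, rfl⟩ := Finset.mem_image.1 hf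
  obtain ⟨-, hA₀, hx⟩ := Finset.mem_filter.1 hA₀
  obtain ⟨hfA₀, hA₀f⟩ := hπ A₀ hA₀
  set f := π A₀
  obtain ⟨p, hp, hpf⟩ : ∃ p ∈ polyhedron S, ⟪x - f, p - f⟫ < 0 := by
    by_contra! hP
    exact hx ((mem_sub_normalCone_iff face_subset_polyhedron).2 ⟨f, hfA₀, hA₀f, hP⟩)
  rw [← sum_eulerChar_openFace_eq_zero (w := innerSub (x - f) f) (face_subset_polyhedron hfA₀) hp
    (by simp [innerSub_apply]) (by rwa [innerSub_apply]), Finset.filter_filter]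
  refine Finset.sum_congr (Finset.filter_congr fun A _ ↦ ?_) fun _ _ ↦ rfl
  simp only [innerSub_apply]
  constructor
  · rintro ⟨⟨hA, -⟩, hAf⟩
    exact ⟨hA, hAf ▸ hπ A hA⟩
  · rintro ⟨hA, hAf⟩
    refine ⟨⟨hA, fun hxA ↦ ?_⟩, (hπ_unique A hA f hAf).symm⟩
    obtain ⟨q, hqA, hAq, hPq⟩ := (mem_sub_normalCone_iff face_subset_polyhedron).1 hxA
    have hqf : q = f := (hπ_unique A hA q ⟨hqA, hAq⟩).trans (hπ_unique A hA f hAf).symm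
    exact (hPq p hp).not_gt (hqf ▸ hpf)

theorem phi_polyhedron (S : Finset (Euc d →ᵃ[ℝ] ℝ)) (x : Euc d) :
    phi (polyhedron S) x = eulerSum S Set.univ := by
  classical
  let J := S.powerset.filter fun A ↦ (openFace S A).Nonempty
  calc phi (polyhedron S) x
      = ∑ A ∈ J with x ∈ face S A - normalCone (polyhedron S) (face S A),
          eulerChar (openFace S A) := by
        rw [phi_polyhedron_eq_sum, Finset.filter_filter]
    _ = ∑ A ∈ J, eulerChar (openFace S A) := by
        rw [← Finset.sum_filter_add_sum_filter_not J
          fun A ↦ x ∈ face S A - normalCone (polyhedron S) (face S A), left_eq_add,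
          Finset.filter_filter, sum_eulerChar_openFace_of_notMem_eq_zero]
    _ = ∑ A ∈ S.powerset, eulerChar (openFace S A) :=
        Finset.sum_filter_of_ne fun A _ hA ↦
          Set.nonempty_iff_ne_empty.2 fun h ↦ hA (h ▸ eulerChar_empty)
    _ = eulerSum S Set.univ := by simp only [eulerSum, Set.univ_inter]

end Polyhedron

theorem phi_eq_zero_of_unbounded_lineFree_general {d : ℕ} {P : Set (Euc d)} (hP : IsPolyhedral P)
    {p r : Euc d} {t₀ : ℝ} (hray : ∀ t : ℝ, 0 ≤ t → p + t • r ∈ P) (hline : p + t₀ • r ∉ P)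
    (x : Euc d) : phi P x = 0 := by
  obtain ⟨S, rfl⟩ := exists_eq_polyhedron_of_isPolyhedral hP
  have hp : p ∈ polyhedron S := by simpa using hray 0 le_rfl
  have hr : ∀ g ∈ S, g.linear r ≤ 0 := fun g hg ↦
    linear_nonpos_of_forall_apply_add_smul_nonpos fun t ht ↦ hray t ht g hg
  obtain ⟨k, hkS, hk⟩ : ∃ k ∈ S, k.linear r < 0 := by
    by_contra! hnonneg
    refine hline fun g hg ↦ ?_
    rw [affineMap_apply_add_smul_real, (hr g hg).antisymm (hnonneg g hg), mul_zero, add_zero]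
    exact hp g hg
  rw [phi_polyhedron, eulerSum_univ_eq_zero hr hkS hk]

theorem phi_eq_zero_of_unbounded_lineFree {d : ℕ} (P : Set (Euc d))
    (hP : IsPolyhedral P) (hne : P.Nonempty)
    (hub : ¬ Bornology.IsBounded P) (hlf : LineFree P) :
    ∀ x : Euc d, phi P x = 0 := by
  obtain ⟨S, rfl⟩ := exists_eq_polyhedron_of_isPolyhedral hP
  obtain ⟨p, hp⟩ := hne
  obtain ⟨r, hr, hray⟩ :=
    exists_ray_subset_of_not_isBounded (convex_polyhedron S) (isClosed_polyhedron S) hub hp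
  obtain ⟨t₀, hline⟩ := hlf p r hr
  exact phi_eq_zero_of_unbounded_lineFree_general hP hray hline
end
end

section
/- Let P be a nonempty polyhedral set in ℝ^d and F a nonempty face of P. Then the set F - N(P,F) admits the disjoint decomposition F - N(P,F) = ⨆_{G,H faces of P, G ⊆ F ⊆ H} (relint G - relint N(P,H)), and in particular its interior equals relint F - relint N(P,F), and its boundary equals the union of relint G - relint N(P,H) over faces G ⊆ F ⊆ H with G ≠ H. -/
open RealInnerProductSpace Pointwise

noncomputable section

/-!
For a face `F` of a polyhedral set, the differences of `F` and those of its normal cone are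
orthogonal, so `(f, n) ↦ f - n` is antilipschitz on `F × N(P, F)`. Hence `F - N(P, F)` is closed
and `f`, `n` can be recovered from `f - n`: disjointness of the cells reduces to the fact that a
face `G` is determined by any point of `relint G`, and a face `H` by any point of `relint N(P, H)`,
`H` being the set of maximizers over `P` of the functional that point defines. The cell of `f - n`
is accordingly given by the smallest face through `f` and the largest face on which `n` is
maximized.

The essential consequence of polyhedrality is that the feasible directions at `x` are exactly those
making a nonpositive inner product with every normal at `x`. It shows that every
`n ∈ relint N(P, H)` is maximized exactly on `H`, and that `F - N(P, F)` spans the space, so that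
its interior is its relative interior. Conversely, if `H` is the set of maximizers of `n`, then
`n ∈ relint N(P, H)`: otherwise a functional supporting `H - N(P, H)` at a boundary point `x - n`,
with `x ∈ relint H`, yields a feasible direction at `x` which stays in `H`, yet is not orthogonal
to `N(P, H)`.
-/

section FeasibleCone

variable {E : Type*} [AddCommGroup E] [Module ℝ E] {C F : Set E} {x y v w : E}

/-- The cone of feasible directions of `C` at `x`: the directions in which one can move from `x`
by a positive amount and land in `C`. For convex `C` the segment travelled then stays in `C`. -/
def feasibleCone (C : Set E) (x : E) : Set E :=
  {v | ∃ ε : ℝ, 0 < ε ∧ x + ε • v ∈ C}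

theorem sub_mem_feasibleCone (hy : y ∈ C) : y - x ∈ feasibleCone C x :=
  ⟨1, one_pos, by simpa using hy⟩

theorem smul_mem_feasibleCone {t : ℝ} (ht : 0 < t) (hv : v ∈ feasibleCone C x) :
    t • v ∈ feasibleCone C x := by
  obtain ⟨ε, hε, hεv⟩ := hv
  exact ⟨ε / t, div_pos hε ht, by rwa [smul_smul, div_mul_cancel₀ _ ht.ne']⟩

theorem add_mem_feasibleCone (hC : Convex ℝ C) (hv : v ∈ feasibleCone C x)
    (hw : w ∈ feasibleCone C x) : v + w ∈ feasibleCone C x := by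
  obtain ⟨ε, hε, hεv⟩ := hv
  obtain ⟨δ, hδ, hδw⟩ := hw
  refine ⟨ε * δ / (ε + δ), by positivity, ?_⟩
  convert hC hεv hδw (a := δ / (ε + δ)) (b := ε / (ε + δ)) (by positivity) (by positivity)
    (by field_simp; ring) using 1
  match_scalars <;> field_simp
  ring

theorem sub_mem_feasibleCone_iff :
    x - y ∈ feasibleCone C x ↔ ∃ z ∈ C, x ∈ openSegment ℝ y z := by
  constructor
  · rintro ⟨ε, hε, hz⟩
    refine ⟨_, hz, ε / (1 + ε), 1 / (1 + ε), by positivity, by positivity, by field_simp; ring, ?_⟩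
    match_scalars <;> field_simp
    ring
  · rintro ⟨z, hz, a, b, ha, hb, hab, rfl⟩
    refine ⟨a / b, div_pos ha hb, ?_⟩
    convert hz using 1
    obtain rfl : a = 1 - b := eq_sub_of_add_eq hab
    match_scalars <;> field_simp <;> ring

theorem mem_feasibleCone_of_isExtreme (hF : IsExtreme ℝ C F) (hx : x ∈ F)
    (hv : v ∈ feasibleCone C x) (hv' : -v ∈ feasibleCone C x) : v ∈ feasibleCone F x := by
  obtain ⟨ε, hε, hεv⟩ := hv
  have hback : x - (x + ε • v) ∈ feasibleCone C x := by
    simpa using smul_mem_feasibleCone hε hv'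
  obtain ⟨z, hz, hxz⟩ := sub_mem_feasibleCone_iff.1 hback
  exact ⟨ε, hε, hF.left_mem_of_mem_openSegment hεv hz hx hxz⟩

/-- The smallest face of a convex set `C` containing `x ∈ C`: the points of `C` from which a
segment can be prolonged in `C` beyond `x`. -/
def minFace (C : Set E) (x : E) : Set E :=
  {y ∈ C | x - y ∈ feasibleCone C x}

theorem self_mem_minFace (hx : x ∈ C) : x ∈ minFace C x :=
  ⟨hx, sub_mem_feasibleCone hx⟩

theorem convex_minFace (hC : Convex ℝ C) : Convex ℝ (minFace C x) := by
  rw [convex_iff_forall_pos]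
  rintro y ⟨hy, hxy⟩ z ⟨hz, hxz⟩ a b ha hb hab
  refine ⟨hC hy hz ha.le hb.le hab, ?_⟩
  convert add_mem_feasibleCone hC (smul_mem_feasibleCone ha hxy) (smul_mem_feasibleCone hb hxz)
    using 1
  obtain rfl : a = 1 - b := eq_sub_of_add_eq hab
  module

theorem isExtreme_minFace (hC : Convex ℝ C) : IsExtreme ℝ C (minFace C x) := by
  refine ⟨fun y hy => hy.1, ?_⟩
  rintro y hy z hz _ ⟨-, hfeas⟩ ⟨a, b, ha, hb, hab, rfl⟩
  refine ⟨hy, ?_⟩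
  have hsum := smul_mem_feasibleCone (inv_pos.2 ha) <|
    add_mem_feasibleCone hC hfeas (smul_mem_feasibleCone hb (sub_mem_feasibleCone (x := x) hz))
  convert hsum using 1
  obtain rfl : b = 1 - a := eq_sub_of_add_eq' hab
  match_scalars <;> field_simp <;> ring

end FeasibleCone

section IntrinsicInterior

section TopologicalVectorSpace

variable {E : Type*} [AddCommGroup E] [Module ℝ E] [TopologicalSpace E] {C F G : Set E} {x y z : E}

theorem interior_eq_intrinsicInterior_of_affineSpan_eq_top (hC : affineSpan ℝ C = ⊤) :
    interior C = intrinsicInterior ℝ C := by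
  refine interior_subset_intrinsicInterior.antisymm ?_
  have hopen : IsOpen (affineSpan ℝ C : Set E) := by simp [hC]
  exact (hopen.isOpenMap_subtype_val.image_interior_subset _).trans <|
    interior_mono (Set.image_preimage_subset _ _)

variable [IsTopologicalAddGroup E] [ContinuousSMul ℝ E]

theorem sub_mem_feasibleCone_of_mem_intrinsicInterior (hx : x ∈ intrinsicInterior ℝ C)
    (hy : y ∈ C) : x - y ∈ feasibleCone C x := by
  obtain ⟨x, hxC, rfl⟩ := mem_intrinsicInterior.1 hx
  have : Nonempty (affineSpan ℝ C) := ⟨x⟩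
  let y' : affineSpan ℝ C := ⟨y, subset_affineSpan ℝ C hy⟩
  have hmem := (eventually_homothety_mem_of_mem_interior ℝ y' hxC).filter_mono
    (nhdsWithin_le_nhds (s := Set.Ioi 1))
  obtain ⟨δ, hδC, hδ⟩ := (hmem.and self_mem_nhdsWithin).exists
  refine ⟨δ - 1, sub_pos.2 hδ, ?_⟩
  rw [Set.mem_preimage] at hδC
  convert hδC using 1
  simp only [AffineMap.homothety_apply, AffineSubspace.coe_vadd, Submodule.coe_smul,
    AffineSubspace.coe_vsub, vsub_eq_sub, vadd_eq_add, y']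
  module

theorem openSegment_subset_intrinsicInterior (hC : Convex ℝ C) (hz : z ∈ intrinsicInterior ℝ C)
    (hy : y ∈ C) : openSegment ℝ z y ⊆ intrinsicInterior ℝ C := by
  obtain ⟨z, hzC, rfl⟩ := mem_intrinsicInterior.1 hz
  have : Nonempty (affineSpan ℝ C) := ⟨z⟩
  let y' : affineSpan ℝ C := ⟨y, subset_affineSpan ℝ C hy⟩
  rintro _ ⟨a, b, ha, hb, hab, rfl⟩
  have hval : ∀ w : affineSpan ℝ C, (AffineMap.homothety y' a w : E) = a • (w : E) + b • y := by
    intro w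
    obtain rfl := eq_sub_of_add_eq' hab
    simp only [AffineMap.homothety_apply, AffineSubspace.coe_vadd, Submodule.coe_smul,
      AffineSubspace.coe_vsub, vsub_eq_sub, vadd_eq_add, y']
    module
  have hmaps : Set.MapsTo (AffineMap.homothety y' a) (Subtype.val ⁻¹' C) (Subtype.val ⁻¹' C) :=
    fun w hw => by simpa only [Set.mem_preimage, hval] using hC hw hy ha.le hb.le hab
  exact ⟨_, interior_mono hmaps.image_subset <|
    (AffineMap.homothety_isOpenMap y' a ha.ne').image_interior_subset _ ⟨z, hzC, rfl⟩, hval z⟩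

theorem subset_of_isExtreme_of_mem_intrinsicInterior (hF : IsExtreme ℝ C F) (hG : G ⊆ C)
    (hxG : x ∈ intrinsicInterior ℝ G) (hxF : x ∈ F) : G ⊆ F := by
  intro y hy
  obtain ⟨z, hz, hxz⟩ :=
    sub_mem_feasibleCone_iff.1 (sub_mem_feasibleCone_of_mem_intrinsicInterior hxG hy)
  exact hF.left_mem_of_mem_openSegment (hG hy) (hG hz) hxF hxz

theorem exists_strongDual_le_and_lt_of_notMem_interior (hC : Convex ℝ C)
    (hne : (interior C).Nonempty) (hx : x ∉ interior C) :
    ∃ l : StrongDual ℝ E, (∀ y ∈ C, l y ≤ l x) ∧ ∀ y ∈ interior C, l y < l x := by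
  obtain ⟨l, hl⟩ := geometric_hahn_banach_open_point hC.interior isOpen_interior hx
  refine ⟨l, fun y hy => ?_, hl⟩
  have hy' : y ∈ closure (interior C) := by
    rw [hC.closure_interior_eq_closure_of_nonempty_interior hne]
    exact subset_closure hy
  exact closure_minimal (fun z hz => (hl z hz).le)
    (isClosed_le l.continuous continuous_const) hy'

end TopologicalVectorSpace

section FiniteDimensional

variable {E : Type*} [NormedAddCommGroup E] [NormedSpace ℝ E] [FiniteDimensional ℝ E]
  {E' : Type*} [NormedAddCommGroup E'] [NormedSpace ℝ E'] [FiniteDimensional ℝ E']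
  {A B C : Set E} {x : E}

theorem mem_intrinsicInterior_of_forall_sub_mem_feasibleCone (hC : Convex ℝ C) (hx : x ∈ C)
    (h : ∀ y ∈ C, x - y ∈ feasibleCone C x) : x ∈ intrinsicInterior ℝ C := by
  obtain ⟨z, hz⟩ := Set.Nonempty.intrinsicInterior hC ⟨x, hx⟩
  obtain ⟨y, hy, hxy⟩ := sub_mem_feasibleCone_iff.1 (h z (intrinsicInterior_subset hz))
  exact openSegment_subset_intrinsicInterior hC hz hy hxy

theorem mem_intrinsicInterior_minFace (hC : Convex ℝ C) (hx : x ∈ C) :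
    x ∈ intrinsicInterior ℝ (minFace C x) :=
  mem_intrinsicInterior_of_forall_sub_mem_feasibleCone (convex_minFace hC) (self_mem_minFace hx)
    fun y hy => mem_feasibleCone_of_isExtreme (isExtreme_minFace hC) (self_mem_minFace hx) hy.2 <|
      neg_sub x y ▸ sub_mem_feasibleCone hy.1

theorem intrinsicInterior_image_linearMap (f : E →ₗ[ℝ] E') (hC : Convex ℝ C) :
    intrinsicInterior ℝ (f '' C) = f '' intrinsicInterior ℝ C := by
  apply Set.Subset.antisymm
  · intro y hy
    have hne : C.Nonempty := Set.image_nonempty.1 ⟨y, intrinsicInterior_subset hy⟩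
    obtain ⟨a, ha⟩ := Set.Nonempty.intrinsicInterior hC hne
    obtain ⟨_, ⟨c, hc, rfl⟩, hyc⟩ := sub_mem_feasibleCone_iff.1 <|
      sub_mem_feasibleCone_of_mem_intrinsicInterior hy <|
        Set.mem_image_of_mem f (intrinsicInterior_subset ha)
    have himage := image_openSegment (𝕜 := ℝ) f.toAffineMap a c
    rw [LinearMap.coe_toAffineMap] at himage
    rw [← himage] at hyc
    exact Set.image_mono (openSegment_subset_intrinsicInterior hC ha hc) hyc
  · rintro _ ⟨x, hx, rfl⟩
    refine mem_intrinsicInterior_of_forall_sub_mem_feasibleCone (hC.linear_image f)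
      (Set.mem_image_of_mem f (intrinsicInterior_subset hx)) ?_
    rintro _ ⟨y, hy, rfl⟩
    obtain ⟨ε, hε, hmem⟩ := sub_mem_feasibleCone_of_mem_intrinsicInterior hx hy
    exact ⟨ε, hε, _, hmem, by simp⟩

theorem intrinsicInterior_sub (hA : Convex ℝ A) (hB : Convex ℝ B) :
    intrinsicInterior ℝ (A - B) = intrinsicInterior ℝ A - intrinsicInterior ℝ B := by
  have h := intrinsicInterior_image_linearMap (LinearMap.fst ℝ E E - LinearMap.snd ℝ E E)
    (hA.prod hB)
  rw [intrinsicInterior_prod_eq] at h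
  rw [← Set.sub_image_prod, ← Set.sub_image_prod]
  exact h

end FiniteDimensional

end IntrinsicInterior

section Orthogonal

variable {E : Type*} [NormedAddCommGroup E] [InnerProductSpace ℝ E] {A B : Set E}

theorem antilipschitzWith_sub_of_inner_eq_zero
    (h : ∀ a ∈ A, ∀ a' ∈ A, ∀ b ∈ B, ∀ b' ∈ B, ⟪a - a', b - b'⟫ = 0) :
    AntilipschitzWith 1 fun p : A × B => (p.1 - p.2 : E) := by
  refine AntilipschitzWith.of_le_mul_dist ?_
  rintro ⟨⟨a, ha⟩, ⟨b, hb⟩⟩ ⟨⟨a', ha'⟩, ⟨b', hb'⟩⟩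
  have hpyth : ‖a - b - (a' - b')‖ ^ 2 = ‖a - a'‖ ^ 2 + ‖b - b'‖ ^ 2 := by
    rw [sub_sub_sub_comm, norm_sub_sq_real, h a ha a' ha' b hb b' hb']
    ring
  simp only [Prod.dist_eq, Subtype.dist_eq, dist_eq_norm, NNReal.coe_one, one_mul]
  refine max_le ?_ ?_ <;> refine le_of_sq_le_sq ?_ (norm_nonneg _) <;> rw [hpyth]
  · exact le_add_of_nonneg_right (sq_nonneg _)
  · exact le_add_of_nonneg_left (sq_nonneg _)

theorem isClosed_sub_of_inner_eq_zero [CompleteSpace E] (hA : IsClosed A) (hB : IsClosed B)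
    (h : ∀ a ∈ A, ∀ a' ∈ A, ∀ b ∈ B, ∀ b' ∈ B, ⟪a - a', b - b'⟫ = 0) : IsClosed (A - B) := by
  have := hA.completeSpace_coe
  have := hB.completeSpace_coe
  have huc : UniformContinuous fun p : A × B => (p.1 - p.2 : E) :=
    (uniformContinuous_subtype_val.comp uniformContinuous_fst).sub
      (uniformContinuous_subtype_val.comp uniformContinuous_snd)
  convert (antilipschitzWith_sub_of_inner_eq_zero h).isClosed_range huc
  ext x
  simp [Set.mem_sub]

theorem eq_and_eq_of_sub_eq_sub_of_inner_eq_zero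
    (h : ∀ a ∈ A, ∀ a' ∈ A, ∀ b ∈ B, ∀ b' ∈ B, ⟪a - a', b - b'⟫ = 0) {a a' b b' : E}
    (ha : a ∈ A) (ha' : a' ∈ A) (hb : b ∈ B) (hb' : b' ∈ B) (hab : a - b = a' - b') :
    a = a' ∧ b = b' := by
  simpa using (antilipschitzWith_sub_of_inner_eq_zero h).injective
    (a₁ := (⟨a, ha⟩, ⟨b, hb⟩)) (a₂ := (⟨a', ha'⟩, ⟨b', hb'⟩)) hab

end Orthogonal

section NormalCone

variable {d : ℕ} {P F G H : Set (Euc d)} {n x u f g : Euc d}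

theorem zero_mem_normalCone : 0 ∈ normalCone P F :=
  fun _ _ _ _ => (inner_zero_left _).le

theorem smul_mem_normalCone {t : ℝ} (ht : 0 ≤ t) (hu : u ∈ normalCone P F) :
    t • u ∈ normalCone P F := by
  intro f hf z hz
  rw [real_inner_smul_left]
  exact mul_nonpos_of_nonneg_of_nonpos ht (hu f hf z hz)

theorem normalCone_eq_iInter :
    normalCone P F = ⋂ f ∈ F, ⋂ z ∈ P, {u : Euc d | ⟪u, z - f⟫ ≤ 0} := by
  ext u
  simp [normalCone]

theorem convex_normalCone : Convex ℝ (normalCone P F) := by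
  rw [normalCone_eq_iInter]
  exact convex_iInter₂ fun f _ => convex_iInter₂ fun z _ =>
    convex_halfSpace_le (((innerₗ (Euc d)).flip (z - f)).isLinear) 0

theorem isClosed_normalCone : IsClosed (normalCone P F) := by
  rw [normalCone_eq_iInter]
  exact isClosed_biInter fun f _ => isClosed_biInter fun z _ =>
    isClosed_le (by fun_prop) continuous_const

theorem normalCone_anti (h : F ⊆ H) : normalCone P H ⊆ normalCone P F :=
  fun _ hu f hf => hu f (h hf)

theorem inner_sub_eq_zero_of_mem_normalCone (hFP : F ⊆ P) (hu : u ∈ normalCone P F) (hf : f ∈ F)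
    (hg : g ∈ F) : ⟪u, f - g⟫ = 0 := by
  refine le_antisymm (hu g hg f (hFP hf)) ?_
  rw [← neg_sub, inner_neg_right, neg_nonneg]
  exact hu f hf g (hFP hg)

theorem inner_sub_sub_eq_zero_of_normalCone (hFP : F ⊆ P) :
    ∀ f ∈ F, ∀ g ∈ F, ∀ u ∈ normalCone P F, ∀ v ∈ normalCone P F, ⟪f - g, u - v⟫ = 0 := by
  intro f hf g hg u hu v hv
  rw [real_inner_comm, inner_sub_left, inner_sub_eq_zero_of_mem_normalCone hFP hu hf hg,
    inner_sub_eq_zero_of_mem_normalCone hFP hv hf hg, sub_zero]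

theorem normalCone_eq_normalCone_singleton (hFP : F ⊆ P) (hx : x ∈ intrinsicInterior ℝ F) :
    normalCone P F = normalCone P {x} := by
  have hxF := intrinsicInterior_subset hx
  refine (normalCone_anti (Set.singleton_subset_iff.2 hxF)).antisymm fun u hu f hf z hz => ?_
  obtain ⟨ε, hε, hmem⟩ := sub_mem_feasibleCone_of_mem_intrinsicInterior hx hf
  have hxf := hu x rfl _ (hFP hmem)
  rw [add_sub_cancel_left, real_inner_smul_right] at hxf
  rw [← sub_add_sub_cancel z x f, inner_add_right]
  exact add_nonpos (hu x rfl z hz) (nonpos_of_mul_nonpos_right hxf hε)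

theorem subset_toExposed_iff_mem_normalCone (hFP : F ⊆ P) :
    F ⊆ (innerSL ℝ n).toExposed P ↔ n ∈ normalCone P F := by
  simp only [ContinuousLinearMap.toExposed, innerSL_apply_apply, normalCone, inner_sub_right,
    sub_nonpos]
  exact ⟨fun h f hf => (h hf).2, fun h f hf => ⟨hFP hf, h f hf⟩⟩

theorem isFaceOf_minFace (hP : Convex ℝ P) (hx : x ∈ P) : IsFaceOf P (minFace P x) :=
  ⟨⟨x, self_mem_minFace hx⟩, convex_minFace hP, isExtreme_minFace hP⟩

theorem isFaceOf_toExposed (hP : Convex ℝ P) {l : StrongDual ℝ (Euc d)}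
    (hne : (l.toExposed P).Nonempty) : IsFaceOf P (l.toExposed P) :=
  ⟨hne, ContinuousLinearMap.toExposed.isExposed.convex hP,
    ContinuousLinearMap.toExposed.isExposed.isExtreme⟩

theorem IsFaceOf.eq_of_mem_intrinsicInterior (hF : IsFaceOf P F) (hG : IsFaceOf P G)
    (hxF : x ∈ intrinsicInterior ℝ F) (hxG : x ∈ intrinsicInterior ℝ G) : F = G :=
  (subset_of_isExtreme_of_mem_intrinsicInterior hG.2.2 hF.2.2.subset hxF
    (intrinsicInterior_subset hxG)).antisymm
  (subset_of_isExtreme_of_mem_intrinsicInterior hF.2.2 hG.2.2.subset hxG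
    (intrinsicInterior_subset hxF))

end NormalCone

section Polyhedral

variable {d : ℕ} {P F H G₁ G₂ H₁ H₂ : Set (Euc d)} {n x v : Euc d}

theorem IsPolyhedral.eq_iInter (hP : IsPolyhedral P) :
    ∃ s : Finset (Euc d × ℝ), P = ⋂ h ∈ s, {x : Euc d | ⟪h.1, x⟫ ≤ h.2} := by
  obtain ⟨s, rfl⟩ := hP
  exact ⟨s, by ext; simp⟩

theorem IsPolyhedral.convex (hP : IsPolyhedral P) : Convex ℝ P := by
  obtain ⟨s, rfl⟩ := hP.eq_iInter
  exact convex_iInter₂ fun h _ => convex_halfSpace_le (innerₗ (Euc d) h.1).isLinear h.2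

theorem IsPolyhedral.isClosed (hP : IsPolyhedral P) : IsClosed P := by
  obtain ⟨s, rfl⟩ := hP.eq_iInter
  exact isClosed_biInter fun h _ => isClosed_le (by fun_prop) continuous_const

theorem IsPolyhedral.mem_feasibleCone (hP : IsPolyhedral P) (hx : x ∈ P)
    (hv : ∀ u ∈ normalCone P {x}, ⟪u, v⟫ ≤ 0) : v ∈ feasibleCone P x := by
  obtain ⟨s, rfl⟩ := hP
  have hsmall : ∀ᶠ ε in nhdsWithin (0 : ℝ) (Set.Ioi 0), ∀ h ∈ s, ⟪h.1, x + ε • v⟫ ≤ h.2 := by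
    rw [Filter.eventually_all_finset]
    intro h hs
    rcases (hx h hs).eq_or_lt with hactive | hslack
    · have hnormal : h.1 ∈ normalCone {x | ∀ h ∈ s, ⟪h.1, x⟫ ≤ h.2} {x} := by
        rintro _ rfl z hz
        rw [inner_sub_right, hactive, sub_nonpos]
        exact hz h hs
      filter_upwards [self_mem_nhdsWithin] with ε hε
      rw [inner_add_right, real_inner_smul_right, hactive, add_le_iff_nonpos_right]
      exact mul_nonpos_of_nonneg_of_nonpos (le_of_lt hε) (hv h.1 hnormal)
    · have hcont : ContinuousAt (fun ε : ℝ => ⟪h.1, x + ε • v⟫) 0 := by fun_prop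
      exact ((hcont.eventually_lt continuousAt_const (by simpa using hslack)).filter_mono
        nhdsWithin_le_nhds).mono fun _ => le_of_lt
  obtain ⟨ε, hmem, hε⟩ := (hsmall.and self_mem_nhdsWithin).exists
  exact ⟨ε, hε, hmem⟩

theorem IsPolyhedral.affineSpan_face_sub_normalCone (hP : IsPolyhedral P) (hF : IsFaceOf P F) :
    affineSpan ℝ (F - normalCone P F) = ⊤ := by
  obtain ⟨x, hx⟩ := Set.Nonempty.intrinsicInterior hF.2.1 hF.1
  have hxF := intrinsicInterior_subset hx
  have hxD : x ∈ F - normalCone P F := ⟨x, hxF, 0, zero_mem_normalCone, sub_zero x⟩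
  rw [AffineSubspace.affineSpan_eq_top_iff_vectorSpan_eq_top_of_nonempty ℝ _ _ ⟨x, hxD⟩,
    ← Submodule.orthogonal_eq_bot_iff, Submodule.eq_bot_iff]
  intro v hv
  have horth : ∀ y ∈ F - normalCone P F, ⟪y - x, v⟫ = 0 := fun y hy =>
    (Submodule.mem_orthogonal _ _).1 hv _ (vsub_mem_vectorSpan ℝ hy hxD)
  have hnormal : ∀ u ∈ normalCone P {x}, ⟪u, v⟫ = 0 := by
    intro u hu
    rw [← normalCone_eq_normalCone_singleton hF.2.2.subset hx] at hu
    simpa using horth (x - u) (Set.sub_mem_sub hxF hu)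
  obtain ⟨ε, hε, hmem⟩ : v ∈ feasibleCone F x := by
    have hxP := hF.2.2.subset hxF
    refine mem_feasibleCone_of_isExtreme hF.2.2 hxF (hP.mem_feasibleCone hxP ?_)
      (hP.mem_feasibleCone hxP ?_) <;> intro u hu <;> simp [hnormal u hu]
  have hvv := horth _ ⟨_, hmem, 0, zero_mem_normalCone, sub_zero _⟩
  rw [add_sub_cancel_left, real_inner_smul_left] at hvv
  exact inner_self_eq_zero.1 ((mul_eq_zero.1 hvv).resolve_left hε.ne')

theorem IsPolyhedral.interior_face_sub_normalCone (hP : IsPolyhedral P) (hF : IsFaceOf P F) :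
    interior (F - normalCone P F) =
      intrinsicInterior ℝ F - intrinsicInterior ℝ (normalCone P F) := by
  rw [interior_eq_intrinsicInterior_of_affineSpan_eq_top (hP.affineSpan_face_sub_normalCone hF),
    intrinsicInterior_sub hF.2.1 convex_normalCone]

theorem IsPolyhedral.toExposed_eq_of_mem_intrinsicInterior_normalCone (hP : IsPolyhedral P)
    (hH : IsFaceOf P H) (hn : n ∈ intrinsicInterior ℝ (normalCone P H)) :
    (innerSL ℝ n).toExposed P = H := by
  have hHP := hH.2.2.subset
  have hnN := intrinsicInterior_subset hn
  have hsub := (subset_toExposed_iff_mem_normalCone hHP).2 hnN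
  refine Set.Subset.antisymm (fun z hz => ?_) hsub
  obtain ⟨x, hx⟩ := Set.Nonempty.intrinsicInterior hH.2.1 hH.1
  have hxH := intrinsicInterior_subset hx
  have hnz : ⟪n, x - z⟫ = 0 := by
    rw [inner_sub_right, sub_eq_zero]
    exact le_antisymm (hz.2 x (hHP hxH)) ((hsub hxH).2 z hz.1)
  have hfeas : x - z ∈ feasibleCone P x := by
    refine hP.mem_feasibleCone (hHP hxH) fun m hm => ?_
    rw [← normalCone_eq_normalCone_singleton hHP hx] at hm
    obtain ⟨ε, hε, hmem⟩ := sub_mem_feasibleCone_of_mem_intrinsicInterior hn hm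
    have hmz := hmem x hxH z hz.1
    rw [← neg_sub x z, inner_neg_right, inner_add_left, real_inner_smul_left, inner_sub_left,
      hnz] at hmz
    nlinarith
  obtain ⟨w, hw, hxw⟩ := sub_mem_feasibleCone_iff.1 hfeas
  exact hH.2.2.left_mem_of_mem_openSegment hz.1 hw hxH hxw

theorem IsPolyhedral.isClosed_face (hP : IsPolyhedral P) (hF : IsFaceOf P F) : IsClosed F := by
  obtain ⟨n, hn⟩ := Set.Nonempty.intrinsicInterior (convex_normalCone (P := P) (F := F))
    ⟨0, zero_mem_normalCone⟩
  rw [← hP.toExposed_eq_of_mem_intrinsicInterior_normalCone hF hn]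
  exact ContinuousLinearMap.toExposed.isExposed.isClosed hP.isClosed

theorem IsPolyhedral.isClosed_face_sub_normalCone (hP : IsPolyhedral P) (hF : IsFaceOf P F) :
    IsClosed (F - normalCone P F) :=
  isClosed_sub_of_inner_eq_zero (hP.isClosed_face hF) isClosed_normalCone
    (inner_sub_sub_eq_zero_of_normalCone hF.2.2.subset)


theorem IsPolyhedral.exists_inner_lt_of_notMem_intrinsicInterior_normalCone (hP : IsPolyhedral P)
    (hF : IsFaceOf P F) (hn : n ∈ normalCone P F)
    (hn' : n ∉ intrinsicInterior ℝ (normalCone P F)) :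
    ∃ v, (∀ m ∈ normalCone P F, ⟪m, v⟫ ≤ ⟪n, v⟫) ∧ ∃ m ∈ normalCone P F, ⟪m, v⟫ < ⟪n, v⟫ := by
  have hFP := hF.2.2.subset
  obtain ⟨x, hx⟩ := Set.Nonempty.intrinsicInterior hF.2.1 hF.1
  obtain ⟨m₀, hm₀⟩ := Set.Nonempty.intrinsicInterior (convex_normalCone (P := P) (F := F))
    ⟨n, hn⟩
  have hxF := intrinsicInterior_subset hx
  have hxm₀ : x - m₀ ∈ interior (F - normalCone P F) := by
    rw [hP.interior_face_sub_normalCone hF]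
    exact Set.sub_mem_sub hx hm₀
  have hxn : x - n ∉ interior (F - normalCone P F) := by
    rw [hP.interior_face_sub_normalCone hF]
    rintro ⟨y, hy, m, hm, hym⟩
    obtain ⟨-, rfl⟩ := eq_and_eq_of_sub_eq_sub_of_inner_eq_zero
      (inner_sub_sub_eq_zero_of_normalCone hFP) (intrinsicInterior_subset hy) hxF
      (intrinsicInterior_subset hm) hn hym
    exact hn' hm
  obtain ⟨l, hle, hlt⟩ := exists_strongDual_le_and_lt_of_notMem_interior
    (hF.2.1.sub convex_normalCone) ⟨_, hxm₀⟩ hxn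
  obtain ⟨v, hv⟩ : ∃ v, ∀ m, ⟪m, v⟫ = -l m := by
    refine ⟨-(InnerProductSpace.toDual ℝ (Euc d)).symm l, fun m => ?_⟩
    rw [inner_neg_right, real_inner_comm, InnerProductSpace.toDual_symm_apply]
  refine ⟨v, fun m hm => ?_, m₀, intrinsicInterior_subset hm₀, ?_⟩ <;> rw [hv, hv]
  · simpa only [map_sub, sub_le_sub_iff_left, neg_le_neg_iff] using hle _ (Set.sub_mem_sub hxF hm)
  · simpa only [map_sub, sub_lt_sub_iff_left, neg_lt_neg_iff] using hlt _ hxm₀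

theorem IsPolyhedral.mem_intrinsicInterior_normalCone_toExposed (hP : IsPolyhedral P)
    (hne : ((innerSL ℝ n).toExposed P).Nonempty) :
    n ∈ intrinsicInterior ℝ (normalCone P ((innerSL ℝ n).toExposed P)) := by
  set H := (innerSL ℝ n).toExposed P
  have hH : IsFaceOf P H := isFaceOf_toExposed hP.convex hne
  have hHP := hH.2.2.subset
  have hn : n ∈ normalCone P H := (subset_toExposed_iff_mem_normalCone hHP).1 subset_rfl
  by_contra hn'
  obtain ⟨v, hle, m, hm, hlt⟩ :=
    hP.exists_inner_lt_of_notMem_intrinsicInterior_normalCone hH hn hn'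
  have hnv : ⟪n, v⟫ = 0 := by
    have hzero := hle 0 zero_mem_normalCone
    have htwo := hle _ (smul_mem_normalCone zero_le_two hn)
    rw [inner_zero_left] at hzero
    rw [real_inner_smul_left] at htwo
    linarith
  rw [hnv] at hle hlt
  obtain ⟨x, hx⟩ := Set.Nonempty.intrinsicInterior hH.2.1 hH.1
  have hxH := intrinsicInterior_subset hx
  rw [normalCone_eq_normalCone_singleton hHP hx] at hle
  obtain ⟨ε, hε, hxv⟩ := hP.mem_feasibleCone (hHP hxH) hle
  have hxvH : x + ε • v ∈ H := by
    refine ⟨hxv, fun y hy => (hxH.2 y hy).trans_eq ?_⟩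
    simp [inner_add_right, real_inner_smul_right, hnv]
  have hmv := inner_sub_eq_zero_of_mem_normalCone hHP hm hxvH hxH
  rw [add_sub_cancel_left, real_inner_smul_right] at hmv
  exact hlt.ne ((mul_eq_zero.1 hmv).resolve_left hε.ne')

theorem IsPolyhedral.face_sub_normalCone_eq_iUnion (hP : IsPolyhedral P) (hF : IsFaceOf P F) :
    F - normalCone P F =
      ⋃ G ∈ {G : Set (Euc d) | IsFaceOf P G ∧ G ⊆ F},
        ⋃ H ∈ {H : Set (Euc d) | IsFaceOf P H ∧ F ⊆ H},
          (intrinsicInterior ℝ G - intrinsicInterior ℝ (normalCone P H)) := by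
  apply Set.Subset.antisymm
  · rintro _ ⟨f, hf, n, hn, rfl⟩
    have hfP := hF.2.2.subset hf
    have hf_min := mem_intrinsicInterior_minFace hP.convex hfP
    have hmin := isFaceOf_minFace hP.convex hfP
    have hmin_sub : minFace P f ⊆ F :=
      subset_of_isExtreme_of_mem_intrinsicInterior hF.2.2 hmin.2.2.subset hf_min hf
    have hsub_exp := (subset_toExposed_iff_mem_normalCone hF.2.2.subset).2 hn
    have hexp_ne := hF.1.mono hsub_exp
    exact Set.mem_biUnion ⟨hmin, hmin_sub⟩ <|
      Set.mem_biUnion ⟨isFaceOf_toExposed hP.convex hexp_ne, hsub_exp⟩ <|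
        Set.sub_mem_sub hf_min (hP.mem_intrinsicInterior_normalCone_toExposed hexp_ne)
  · exact Set.iUnion₂_subset fun G hG => Set.iUnion₂_subset fun H hH =>
      Set.sub_subset_sub (intrinsicInterior_subset.trans hG.2)
        (intrinsicInterior_subset.trans (normalCone_anti hH.2))

theorem IsPolyhedral.eq_and_eq_of_not_disjoint (hP : IsPolyhedral P) (hFP : F ⊆ P)
    (hG₁ : IsFaceOf P G₁) (hG₁F : G₁ ⊆ F) (hH₁ : IsFaceOf P H₁) (hFH₁ : F ⊆ H₁)
    (hG₂ : IsFaceOf P G₂) (hG₂F : G₂ ⊆ F) (hH₂ : IsFaceOf P H₂) (hFH₂ : F ⊆ H₂)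
    (h : ¬Disjoint (intrinsicInterior ℝ G₁ - intrinsicInterior ℝ (normalCone P H₁))
      (intrinsicInterior ℝ G₂ - intrinsicInterior ℝ (normalCone P H₂))) :
    G₁ = G₂ ∧ H₁ = H₂ := by
  obtain ⟨_, ⟨f, hf, n, hn, rfl⟩, g, hg, m, hm, heq⟩ := Set.not_disjoint_iff.1 h
  obtain ⟨rfl, rfl⟩ := eq_and_eq_of_sub_eq_sub_of_inner_eq_zero
    (inner_sub_sub_eq_zero_of_normalCone hFP)
    (hG₂F (intrinsicInterior_subset hg)) (hG₁F (intrinsicInterior_subset hf))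
    (normalCone_anti hFH₂ (intrinsicInterior_subset hm))
    (normalCone_anti hFH₁ (intrinsicInterior_subset hn)) heq
  exact ⟨hG₁.eq_of_mem_intrinsicInterior hG₂ hf hg,
    (hP.toExposed_eq_of_mem_intrinsicInterior_normalCone hH₁ hn).symm.trans
      (hP.toExposed_eq_of_mem_intrinsicInterior_normalCone hH₂ hm)⟩

theorem IsPolyhedral.frontier_face_sub_normalCone (hP : IsPolyhedral P) (hF : IsFaceOf P F) :
    frontier (F - normalCone P F) =
      ⋃ G ∈ {G : Set (Euc d) | IsFaceOf P G ∧ G ⊆ F},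
        ⋃ H ∈ {H : Set (Euc d) | IsFaceOf P H ∧ F ⊆ H ∧ G ≠ H},
          (intrinsicInterior ℝ G - intrinsicInterior ℝ (normalCone P H)) := by
  rw [(hP.isClosed_face_sub_normalCone hF).frontier_eq, hP.interior_face_sub_normalCone hF,
    hP.face_sub_normalCone_eq_iUnion hF]
  ext x
  simp only [Set.mem_sdiff, Set.mem_iUnion, exists_prop, Set.mem_ofPred_eq]
  constructor
  · rintro ⟨⟨G, ⟨hG, hGF⟩, H, ⟨hH, hFH⟩, hx⟩, hxF⟩
    refine ⟨G, ⟨hG, hGF⟩, H, ⟨hH, hFH, ?_⟩, hx⟩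
    rintro rfl
    exact hxF (hGF.antisymm hFH ▸ hx)
  · rintro ⟨G, ⟨hG, hGF⟩, H, ⟨hH, hFH, hGH⟩, hx⟩
    refine ⟨⟨G, ⟨hG, hGF⟩, H, ⟨hH, hFH⟩, hx⟩, fun hxF => hGH ?_⟩
    obtain ⟨rfl, rfl⟩ := hP.eq_and_eq_of_not_disjoint hF.2.2.subset hG hGF hH hFH hF subset_rfl hF
      subset_rfl (Set.not_disjoint_iff.2 ⟨x, hx, hxF⟩)
    rfl

end Polyhedral

theorem face_minus_normalCone_decomposition {d : ℕ} (P F : Set (Euc d))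
    (hP : IsPolyhedral P) (hne : P.Nonempty) (hF : IsFaceOf P F) :
    (F - normalCone P F =
      ⋃ G ∈ {G : Set (Euc d) | IsFaceOf P G ∧ G ⊆ F},
        ⋃ H ∈ {H : Set (Euc d) | IsFaceOf P H ∧ F ⊆ H},
          (intrinsicInterior ℝ G - intrinsicInterior ℝ (normalCone P H))) ∧
    (∀ G₁ H₁ G₂ H₂ : Set (Euc d),
      IsFaceOf P G₁ → G₁ ⊆ F → IsFaceOf P H₁ → F ⊆ H₁ →
      IsFaceOf P G₂ → G₂ ⊆ F → IsFaceOf P H₂ → F ⊆ H₂ →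
      (G₁, H₁) ≠ (G₂, H₂) →
      Disjoint (intrinsicInterior ℝ G₁ - intrinsicInterior ℝ (normalCone P H₁))
        (intrinsicInterior ℝ G₂ - intrinsicInterior ℝ (normalCone P H₂))) ∧
    (interior (F - normalCone P F) =
      intrinsicInterior ℝ F - intrinsicInterior ℝ (normalCone P F)) ∧
    (frontier (F - normalCone P F) =
      ⋃ G ∈ {G : Set (Euc d) | IsFaceOf P G ∧ G ⊆ F},
        ⋃ H ∈ {H : Set (Euc d) | IsFaceOf P H ∧ F ⊆ H ∧ G ≠ H},
          (intrinsicInterior ℝ G - intrinsicInterior ℝ (normalCone P H))) := by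
  refine ⟨hP.face_sub_normalCone_eq_iUnion hF, ?_, hP.interior_face_sub_normalCone hF,
    hP.frontier_face_sub_normalCone hF⟩
  intro G₁ H₁ G₂ H₂ hG₁ hG₁F hH₁ hFH₁ hG₂ hG₂F hH₂ hFH₂ hpairs
  by_contra hmeet
  exact hpairs <| Prod.ext_iff.2 <| hP.eq_and_eq_of_not_disjoint hF.2.2.subset hG₁ hG₁F hH₁ hFH₁
    hG₂ hG₂F hH₂ hFH₂ hmeet
end
end
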